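/- Let s and k be positive integers with k+s divisible by 3, gcd(s,3k)=1 and gcd(k,3)=1, let u be a primitive element of GF(2^{3k}), and let w be an element of the subfield GF(2^k). For a nonzero q in GF(2^{3k}), set C = w·u^{2^k+1}·q^{2^{k+s}+2^s} + u·q^{2^s+1} and D = w·u^{2^k+1}·q^{2^{k+s}+2^s} + u^{2^k}·q^{2^{2k}+2^{k+s}}. Then C/D is a (2^k − 1)-th power in GF(2^{3k}): there exists a nonzero c in GF(2^{3k}) with C = c^{2^k−1}·D. -/

import Mathlib

/-!
Write `Q = ℓ ^ k` and let `σ x = x ^ Q` be the Frobenius map of `GF(ℓ ^ (n * k))` over `GF(Q)`; the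
case of interest is `ℓ = 2`, `n = 3`. With `X = w * u * q ^ ℓ ^ s + q ^ ℓ ^ ((n - 1) * k)` and
`Y = u * q ^ ℓ ^ s` the two coefficients factor as `C = Y * σ X` and `D = σ Y * X`, so that
`C / D = (X / Y) ^ (Q - 1)` once `X ≠ 0`.

If `X = 0`, then `u = -w⁻¹ * q ^ ℓ ^ ((n - 1) * k) / q ^ ℓ ^ s`. Put `N = 1 + ℓ + ⋯ + ℓ ^ (n - 1)`.
As `s ≡ (n - 1) * k` modulo `n`, the two powers of `ℓ` agree modulo `N`, so the quotient is an
`N`-th power. As `k` and `n` are coprime, `Q - 1` divides `(Q ^ n - 1) / N`, so the element `-w⁻¹`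
of `GF(Q)` is an `N`-th power too. Hence so is `u`, whereas a primitive element is not.
-/

open Finset

theorem geomSum_mul_pow_sub_one_dvd {n k : ℕ} (hkn : k.Coprime n) (ℓ : ℕ) :
    (∑ i ∈ range n, ℓ ^ i) * (ℓ ^ k - 1) ∣ ℓ ^ (n * k) - 1 := by
  rcases Nat.lt_or_ge 1 ℓ with hℓ | hℓ
  · have hgcd : (ℓ ^ n - 1).gcd (ℓ ^ k - 1) = ℓ - 1 := by
      rw [Nat.pow_sub_one_gcd_pow_sub_one, hkn.symm.gcd_eq_one, pow_one]
    have hlcm : (∑ i ∈ range n, ℓ ^ i) * (ℓ ^ k - 1) = (ℓ ^ n - 1).lcm (ℓ ^ k - 1) := by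
      apply Nat.eq_of_mul_eq_mul_left (Nat.sub_pos_of_lt hℓ)
      conv_rhs => rw [← hgcd, Nat.gcd_mul_lcm, ← geom_sum_mul_of_one_le hℓ.le n]
      ring
    rw [hlcm]
    exact Nat.lcm_dvd (Nat.pow_sub_one_dvd_pow_sub_one ℓ (dvd_mul_right n k))
      (Nat.pow_sub_one_dvd_pow_sub_one ℓ (dvd_mul_left k n))
  · have hle : ℓ ^ (n * k) ≤ 1 := pow_le_one₀ (Nat.zero_le ℓ) hℓ
    rw [Nat.sub_eq_zero_of_le hle]
    exact dvd_zero _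

theorem pow_modEq_pow_of_modEq {n a b : ℕ} (hab : a ≡ b [MOD n]) (ℓ : ℕ) :
    ℓ ^ a ≡ ℓ ^ b [MOD ∑ i ∈ range n, ℓ ^ i] := by
  have hone : (ℓ : ZMod (∑ i ∈ range n, ℓ ^ i)) ^ n = 1 := by
    have hsum : (∑ i ∈ range n, (ℓ : ZMod (∑ i ∈ range n, ℓ ^ i)) ^ i) = 0 := by
      exact_mod_cast ZMod.natCast_self (∑ i ∈ range n, ℓ ^ i)
    rw [← sub_eq_zero, ← geom_sum_mul, hsum, zero_mul]
  rw [← ZMod.natCast_eq_natCast_iff, Nat.cast_pow, Nat.cast_pow, pow_eq_pow_mod a hone,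
    pow_eq_pow_mod b hone, hab]

theorem range_powMonoidHom_eq_ker_of_card_eq_mul {G : Type*} [CommGroup G] [IsCyclic G] [Finite G]
    {d e : ℕ} (hG : Nat.card G = d * e) :
    (powMonoidHom d : G →* G).range = (powMonoidHom e : G →* G).ker := by
  have hd : 0 < d := Nat.pos_of_mul_pos_right (hG ▸ Nat.card_pos)
  apply Subgroup.eq_of_le_of_card_ge
  · rintro _ ⟨x, rfl⟩
    rw [MonoidHom.mem_ker, powMonoidHom_apply, powMonoidHom_apply, ← pow_mul, ← hG,
      pow_card_eq_one']
  · rw [IsCyclic.card_powMonoidHom_ker, IsCyclic.card_powMonoidHom_range, hG,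
      Nat.gcd_mul_left_left, Nat.gcd_mul_right_left, Nat.mul_div_cancel_left e hd]

theorem ne_zero_of_card_eq_pow {α : Type*} [Finite α] [Nontrivial α] {ℓ m : ℕ}
    (hα : Nat.card α = ℓ ^ m) : ℓ ≠ 0 := by
  rintro rfl
  exact (Finite.one_lt_card (α := α)).not_ge (hα ▸ pow_le_one₀ le_rfl zero_le_one)

theorem mul_pow_eq_div_pow_sub_one_mul {G₀ : Type*} [CommGroupWithZero G₀] {Q : ℕ} (hQ : Q ≠ 0)
    (x : G₀) {y : G₀} (hy : y ≠ 0) : y * x ^ Q = (x / y) ^ (Q - 1) * (y ^ Q * x) := by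
  rw [← pow_sub_one_mul hQ x, ← pow_sub_one_mul hQ y, div_pow]
  field_simp

theorem pow_natCard_sub_one_eq_one {G₀ : Type*} [GroupWithZero G₀] [Finite G₀] {x : G₀}
    (hx : x ≠ 0) : x ^ (Nat.card G₀ - 1) = 1 := by
  rw [← Nat.card_units]
  exact congrArg Units.val (pow_card_eq_one' (x := Units.mk0 x hx))

theorem pow_natCard_eq_self {G₀ : Type*} [GroupWithZero G₀] [Finite G₀] (x : G₀) :
    x ^ Nat.card G₀ = x := by
  rcases eq_or_ne x 0 with rfl | hx
  · exact zero_pow Nat.card_pos.ne'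
  · rw [← pow_sub_one_mul Nat.card_pos.ne', pow_natCard_sub_one_eq_one hx, one_mul]

section Field

variable {F : Type*} [Field F] [Finite F]

theorem exists_pow_eq_of_pow_eq_one {d e : ℕ} (hF : Nat.card F - 1 = d * e) {x : F}
    (hx : x ^ e = 1) : ∃ y, y ^ d = x := by
  have he : e ≠ 0 := by
    rintro rfl
    have := Finite.one_lt_card (α := F)
    omega
  have hker : Units.ofPowEqOne x e hx he ∈ (powMonoidHom e : Fˣ →* Fˣ).ker :=
    Units.pow_ofPowEqOne hx he
  rw [← range_powMonoidHom_eq_ker_of_card_eq_mul (Nat.card_units F ▸ hF)] at hker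
  obtain ⟨y, hy⟩ := hker
  exact ⟨y, congrArg Units.val hy⟩

theorem pow_ne_of_forall_exists_eq_pow {u : F} (hu : ∀ x : F, x ≠ 0 → ∃ m : ℕ, x = u ^ m) {d : ℕ}
    (hdvd : d ∣ Nat.card F - 1) (hd : d ≠ 1) (v : F) : v ^ d ≠ u := by
  rintro rfl
  have hd0 : d ≠ 0 := by
    rintro rfl
    have := Finite.one_lt_card (α := F)
    omega
  have hsurj : (powMonoidHom d : Fˣ →* Fˣ).range = ⊤ := by
    rw [MonoidHom.range_eq_top]
    intro x
    obtain ⟨m, hm⟩ := hu x x.ne_zero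
    rw [pow_right_comm] at hm
    exact ⟨Units.mk0 (v ^ m) ((pow_ne_zero_iff hd0).1 (hm ▸ x.ne_zero)), Units.ext hm.symm⟩
  apply hd
  rw [← Nat.gcd_eq_right hdvd, ← Nat.card_units, ← IsCyclic.index_powMonoidHom_range, hsurj,
    Subgroup.index_top]

theorem exists_ringHom_eq_pow_of_card_eq_pow {ℓ m : ℕ} (hF : Nat.card F = ℓ ^ m) (j : ℕ) :
    ∃ φ : F →+* F, ∀ x, φ x = x ^ ℓ ^ j := by
  have := Fintype.ofFinite F
  obtain ⟨p, _, r, hp, hpr⟩ := FiniteField.card' F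
  have hm : m ≠ 0 := by
    rintro rfl
    exact Finite.one_lt_card.ne' hF
  rw [Nat.card_eq_fintype_card, hpr] at hF
  obtain ⟨i, -, rfl⟩ := (Nat.dvd_prime_pow hp).1 (hF ▸ dvd_pow_self ℓ hm)
  have := ExpChar.prime (R := F) hp
  exact ⟨iterateFrobenius F p (i * j), fun x => by rw [iterateFrobenius_def, pow_mul]⟩

variable {ℓ n k : ℕ} {u w q : F}

theorem mul_mul_pow_add_pow_ne_zero (hF : Nat.card F = ℓ ^ (n * k)) (hkn : k.Coprime n) {a b : ℕ}
    (hab : a ≡ b [MOD n]) (hu : ∀ v : F, v ^ (∑ i ∈ range n, ℓ ^ i) ≠ u) (hw : w ^ ℓ ^ k = w)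
    (hq : q ≠ 0) : w * u * q ^ ℓ ^ a + q ^ ℓ ^ b ≠ 0 := by
  intro h
  obtain ⟨z, hzQ, hz⟩ : ∃ z : F, z ^ ℓ ^ k = z ∧ z * u * q ^ ℓ ^ a = q ^ ℓ ^ b := by
    obtain ⟨φ, hφ⟩ := exists_ringHom_eq_pow_of_card_eq_pow hF k
    exact ⟨-w, by rw [← hφ, map_neg, hφ, hw], by linear_combination -h⟩
  have hz0 : z ≠ 0 := by
    rintro rfl
    exact pow_ne_zero _ hq (by rw [← hz, zero_mul, zero_mul])
  obtain ⟨t, ht⟩ := geomSum_mul_pow_sub_one_dvd hkn ℓ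
  rw [← hF, mul_assoc] at ht
  set e := (ℓ ^ k - 1) * t
  have hze : z ^ e = 1 := by
    have hzQ1 : z ^ (ℓ ^ k - 1) = 1 := by
      apply mul_right_cancel₀ hz0
      rw [pow_sub_one_mul (pow_ne_zero k (ne_zero_of_card_eq_pow hF)), hzQ, one_mul]
    rw [pow_mul, hzQ1, one_pow]
  have hqe : (q ^ e) ^ ℓ ^ a = (q ^ e) ^ ℓ ^ b := by
    apply pow_eq_pow_of_modEq (pow_modEq_pow_of_modEq hab ℓ)
    rw [← pow_mul, mul_comm e, ← ht, pow_natCard_sub_one_eq_one hq]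
  have hue : u ^ e = 1 := by
    have hpow := congrArg (· ^ e) hz
    simp only [mul_pow, hze, one_mul, pow_right_comm q _ e, hqe] at hpow
    exact mul_right_cancel₀ (pow_ne_zero _ (pow_ne_zero e hq)) (hpow.trans (one_mul _).symm)
  obtain ⟨v, hv⟩ := exists_pow_eq_of_pow_eq_one ht hue
  exact hu v hv

theorem C_div_D_is_power_general {s : ℕ} (hF : Nat.card F = ℓ ^ (n * k)) (hkn : k.Coprime n)
    (hs : n ∣ k + s) (hu : ∀ v : F, v ^ (∑ i ∈ range n, ℓ ^ i) ≠ u) (hw : w ^ ℓ ^ k = w)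
    (hq : q ≠ 0) :
    ∃ c : F, c ≠ 0 ∧
      w * u ^ (ℓ ^ k + 1) * q ^ (ℓ ^ (k + s) + ℓ ^ s) + u * q ^ (ℓ ^ s + 1)
        = c ^ (ℓ ^ k - 1)
          * (w * u ^ (ℓ ^ k + 1) * q ^ (ℓ ^ (k + s) + ℓ ^ s)
              + u ^ ℓ ^ k * q ^ (ℓ ^ ((n - 1) * k) + ℓ ^ (k + s))) := by
  have hℓ : ℓ ≠ 0 := ne_zero_of_card_eq_pow hF
  rcases eq_or_ne u 0 with rfl | hu0
  · exact ⟨1, one_ne_zero, by simp [hℓ]⟩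
  have hexp : (n - 1) * k + k = n * k := by
    have hn : n ≠ 0 := by
      rintro rfl
      simp [Finite.one_lt_card.ne'] at hF
    rw [← Nat.succ_mul, Nat.succ_eq_add_one, Nat.sub_one_add_one hn]
  have hmod : s ≡ (n - 1) * k [MOD n] := by
    apply Nat.ModEq.add_right_cancel' k
    rw [hexp, add_comm]
    exact hs.modEq_zero_nat.trans (dvd_mul_right n k).modEq_zero_nat.symm
  obtain ⟨φ, hφ⟩ := exists_ringHom_eq_pow_of_card_eq_pow hF k
  set X := w * u * q ^ ℓ ^ s + q ^ ℓ ^ ((n - 1) * k) with hX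
  set Y := u * q ^ ℓ ^ s with hY
  have hX0 : X ≠ 0 := mul_mul_pow_add_pow_ne_zero hF hkn hmod hu hw hq
  have hY0 : Y ≠ 0 := mul_ne_zero hu0 (pow_ne_zero _ hq)
  have hXQ : X ^ ℓ ^ k = w * u ^ ℓ ^ k * q ^ ℓ ^ (k + s) + q := by
    rw [← hφ, hX, map_add, hφ, hφ, mul_pow, mul_pow, hw, ← pow_mul, ← pow_mul, ← pow_add,
      ← pow_add, add_comm s k, hexp, ← hF, pow_natCard_eq_self]
  have hYQ : Y ^ ℓ ^ k = u ^ ℓ ^ k * q ^ ℓ ^ (k + s) := by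
    rw [hY, mul_pow, ← pow_mul, ← pow_add, add_comm s k]
  refine ⟨X / Y, div_ne_zero hX0 hY0, ?_⟩
  calc
    _ = Y * X ^ ℓ ^ k := by rw [hXQ, hY]; ring
    _ = (X / Y) ^ (ℓ ^ k - 1) * (Y ^ ℓ ^ k * X) :=
      mul_pow_eq_div_pow_sub_one_mul (pow_ne_zero k hℓ) X hY0
    _ = _ := by rw [hYQ, hX]; ring

end Field

/-- The ratio `C/D` of the coefficients `C = w u^{2^k+1} q^{2^{k+s}+2^s} + u q^{2^s+1}`
and `D = w u^{2^k+1} q^{2^{k+s}+2^s} + u^{2^k} q^{2^{2k}+2^{k+s}}` is a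
`(2^k − 1)`-th power. -/
theorem C_div_D_is_power (s k : ℕ) (hs : 0 < s) (hk : 0 < k)
    (h3 : 3 ∣ (k + s)) (hsk : Nat.gcd s (3 * k) = 1) (hk3 : Nat.gcd k 3 = 1)
    (u w : GaloisField 2 (3 * k))
    (hu : ∀ x : GaloisField 2 (3 * k), x ≠ 0 → ∃ m : ℕ, x = u ^ m)
    (hw : w ^ (2 ^ k) = w)
    (q : GaloisField 2 (3 * k)) (hq : q ≠ 0) :
    ∃ c : GaloisField 2 (3 * k), c ≠ 0 ∧
      w * u ^ (2 ^ k + 1) * q ^ (2 ^ (k + s) + 2 ^ s) + u * q ^ (2 ^ s + 1)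
        = c ^ (2 ^ k - 1)
          * (w * u ^ (2 ^ k + 1) * q ^ (2 ^ (k + s) + 2 ^ s)
              + u ^ (2 ^ k) * q ^ (2 ^ (2 * k) + 2 ^ (k + s))) := by
  have hcard : Nat.card (GaloisField 2 (3 * k)) = 2 ^ (3 * k) := GaloisField.card 2 _ (by omega)
  have hdvd : ∑ i ∈ range 3, 2 ^ i ∣ Nat.card (GaloisField 2 (3 * k)) - 1 :=
    hcard ▸ dvd_of_mul_right_dvd (geomSum_mul_pow_sub_one_dvd hk3 2)
  simpa using C_div_D_is_power_general hcard hk3 h3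
    (pow_ne_of_forall_exists_eq_pow hu hdvd (by decide)) hw hq
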